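/- Let M = cQ + εD ∈ 𝔻ℍ[t] be a bounded monic reduced motion polynomial with c ∈ ℝ[t], Q, D ∈ ℍ[t], and mrpf(Q) = 1, and let M = ∏_{i=1}^r (cᵢQᵢ + εDᵢ) be a factorization into monic motion polynomials with cᵢ ∈ ℝ[t], Qᵢ, Dᵢ ∈ ℍ[t], mrpf(Qᵢ) = 1, and ν(cᵢQᵢ + εDᵢ) = Nᵢ^{nᵢ} for pairwise coprime real irreducible quadratic polynomials N₁, …, N_r and positive integers n₁, …, n_r. Define g_{iL} := mrpf(cᵢ, Qᵢ*·Dᵢ), g_{iR} := mrpf(cᵢ, Dᵢ·Qᵢ*), gᵢ := mrpf of cᵢ, Dᵢ·Qᵢ* and Qᵢ*·Dᵢ jointly, and g_L := mrpf(c, Q*·D), g_R := mrpf(c, D·Q*), g := the greatest common monic real polynomial divisor of c, D·Q*, and Q*·D. Then g_L = ∏_{i=1}^r g_{iL}, g_R = ∏_{i=1}^r g_{iR}, and g = ∏_{i=1}^r gᵢ. -/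

import Mathlib

open Polynomial DualNumber TrivSqZeroExt

noncomputable section

/-- The real quaternions. -/
abbrev Hq : Type := Quaternion ℝ

/-- The dual quaternions. -/
abbrev DHq : Type := DualNumber Hq

/-- Conjugation of a dual quaternion: `(p + ε d)* = p* + ε d*`. -/
instance : Star DHq := ⟨fun x => inl (star x.fst) + inr (star x.snd)⟩

/-- Coefficient-wise (quaternion) conjugation of a polynomial. -/
def cstar {R : Type*} [Semiring R] [Star R] (A : R[X]) : R[X] :=
  A.sum fun n a => Polynomial.C (star a) * Polynomial.X ^ n

/-- The embedding `ℝ[t] → ℍ[t]`. -/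
def qPoly (f : ℝ[X]) : Hq[X] := f.map (algebraMap ℝ Hq)

/-- The embedding `ℍ[t] → 𝔻ℍ[t]` (primal part). -/
def dhQ (P : Hq[X]) : DHq[X] := P.map (inlHom Hq Hq)

/-- The embedding `ℝ[t] → 𝔻ℍ[t]`. -/
def dPoly (f : ℝ[X]) : DHq[X] := dhQ (qPoly f)

/-- The dual quaternion polynomial `P + ε D` with primal part `P` and dual part `D`. -/
def mp (P D : Hq[X]) : DHq[X] := dhQ P + Polynomial.C ε * dhQ D

/-- The primal part of a dual quaternion polynomial. -/
def primal (A : DHq[X]) : Hq[X] := A.map (fstHom ℝ Hq Hq).toRingHom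

/-- A motion polynomial: a dual quaternion polynomial whose norm polynomial
`ν(M) = M·M*` is a nonzero real polynomial. -/
def IsMotion (M : DHq[X]) : Prop := ∃ f : ℝ[X], f ≠ 0 ∧ M * cstar M = dPoly f

/-- A real polynomial divides a quaternion polynomial. -/
def RDvdQ (f : ℝ[X]) (A : Hq[X]) : Prop := ∃ B : Hq[X], A = qPoly f * B

/-- A real polynomial divides a dual quaternion polynomial. -/
def RDvdD (f : ℝ[X]) (A : DHq[X]) : Prop := ∃ B : DHq[X], A = dPoly f * B

/-- `g` is the greatest common monic real polynomial divisor of a quaternion polynomial `A`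
(with itself), i.e. `g = mrpf A`. -/
def IsMrpfQ (g : ℝ[X]) (A : Hq[X]) : Prop :=
  g.Monic ∧ RDvdQ g A ∧ ∀ f : ℝ[X], f.Monic → RDvdQ f A → f ∣ g

/-- `g` is the greatest common monic real polynomial divisor of `c ∈ ℝ[t]` and a quaternion
polynomial `A`, i.e. `g = mrpf(c, A)`. -/
def IsMrpf2 (g : ℝ[X]) (c : ℝ[X]) (A : Hq[X]) : Prop :=
  g.Monic ∧ g ∣ c ∧ RDvdQ g A ∧
    ∀ f : ℝ[X], f.Monic → f ∣ c → RDvdQ f A → f ∣ g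

/-- `g` is the greatest common monic real polynomial divisor of `c ∈ ℝ[t]` and two quaternion
polynomials `A` and `B`, i.e. `g = mrpf(c, A, B)`. -/
def IsMrpf3 (g : ℝ[X]) (c : ℝ[X]) (A B : Hq[X]) : Prop :=
  g.Monic ∧ g ∣ c ∧ RDvdQ g A ∧ RDvdQ g B ∧
    ∀ f : ℝ[X], f.Monic → f ∣ c → RDvdQ f A → RDvdQ f B → f ∣ g

/-- A quaternion polynomial is reduced: `mrpf = 1`, i.e. it has only constant real
polynomial factors. -/
def ReducedQ (A : Hq[X]) : Prop := ∀ f : ℝ[X], f.Monic → RDvdQ f A → f = 1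

/-- A dual quaternion polynomial is reduced: `mrpf = 1`. -/
def ReducedD (A : DHq[X]) : Prop := ∀ f : ℝ[X], f.Monic → RDvdD f A → f = 1

/-- Boundedness of a (monic reduced) motion polynomial: `mrpf` of its primal part has
no real root, equivalently no linear real polynomial `t - a` divides the primal part. -/
def BoundedD (M : DHq[X]) : Prop :=
  ∀ a : ℝ, ¬ RDvdQ (Polynomial.X - Polynomial.C a) (primal M)

/-- A generic motion polynomial: monic, a motion polynomial, with `mrpf` of the primal
part equal to `1`. -/
def GenericD (M : DHq[X]) : Prop :=
  M.Monic ∧ IsMotion M ∧ ReducedQ (primal M)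

/-- The monic linear dual quaternion polynomial `t - p - ε d`. -/
def lin (p d : Hq) : DHq[X] := mp (Polynomial.X - Polynomial.C p) (-Polynomial.C d)

/-- `M` admits a factorization into monic linear motion polynomial factors. -/
def HasLinFact (M : DHq[X]) : Prop :=
  ∃ L : List DHq, (∀ h ∈ L, IsMotion (Polynomial.X - Polynomial.C h)) ∧
    M = (L.map fun h => Polynomial.X - Polynomial.C h).prod

end
section GM

open Polynomial DualNumber TrivSqZeroExt

lemma gm_coeff_cstar {R : Type*} [Semiring R] [Star R] (h0 : star (0 : R) = 0) (A : R[X]) (n : ℕ) :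
    (cstar A).coeff n = star (A.coeff n) := by
  unfold cstar
  rw [Polynomial.sum_def, Polynomial.finsetSum_coeff]
  simp only [Polynomial.coeff_C_mul_X_pow]
  rw [Finset.sum_ite_eq]
  split_ifs with h
  · rfl
  · rw [Polynomial.notMem_support_iff.mp h, h0]

lemma gm_coeffQ (A : Hq[X]) (n : ℕ) : (cstar A).coeff n = star (A.coeff n) :=
  gm_coeff_cstar (star_zero _) A n

lemma gm_star_mul (A B : Hq[X]) : cstar (A * B) = cstar B * cstar A := by
  ext1 n
  rw [gm_coeffQ, Polynomial.coeff_mul, Polynomial.coeff_mul, star_sum,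
    ← Finset.Nat.sum_antidiagonal_swap]
  refine Finset.sum_congr rfl fun x _ => ?_
  simp [gm_coeffQ]

lemma gm_star_star (A : Hq[X]) : cstar (cstar A) = A := by
  ext1 n; simp [gm_coeffQ]

lemma gm_star_one : cstar (1 : Hq[X]) = 1 := by
  ext1 n; rw [gm_coeffQ, Polynomial.coeff_one]; split_ifs <;> simp

lemma gm_star_q (f : ℝ[X]) : cstar (qPoly f) = qPoly f := by
  ext1 n; rw [gm_coeffQ]; simp [qPoly]

lemma gm_q_mul (a b : ℝ[X]) : qPoly (a * b) = qPoly a * qPoly b := Polynomial.map_mul _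
lemma gm_q_add (a b : ℝ[X]) : qPoly (a + b) = qPoly a + qPoly b := Polynomial.map_add _
lemma gm_q_one : qPoly 1 = 1 := Polynomial.map_one _
lemma gm_q_inj : Function.Injective qPoly :=
  Polynomial.map_injective _ (algebraMap ℝ Hq).injective
lemma gm_q_zero : qPoly 0 = 0 := Polynomial.map_zero _
lemma gm_q_ne {a : ℝ[X]} (h : a ≠ 0) : qPoly a ≠ 0 := fun e =>
  h (gm_q_inj (by rw [e, gm_q_zero]))

lemma gm_comm (f : ℝ[X]) (A : Hq[X]) : qPoly f * A = A * qPoly f := by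
  unfold qPoly
  induction f using Polynomial.induction_on' with
  | add p q hp hq => rw [Polynomial.map_add, add_mul, mul_add, hp, hq]
  | monomial n a =>
    rw [Polynomial.map_monomial, ← Polynomial.C_mul_X_pow_eq_monomial, mul_assoc,
      Polynomial.X_pow_mul, ← mul_assoc, ← mul_assoc]
    congr 1
    ext1 k
    rw [Polynomial.coeff_C_mul, Polynomial.coeff_mul_C, Algebra.commutes]

lemma gm_dvd_left {f : ℝ[X]} {A : Hq[X]} (h : qPoly f ∣ A) (B : Hq[X]) : qPoly f ∣ B * A := by
  obtain ⟨C, rfl⟩ := h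
  exact ⟨B * C, by rw [← mul_assoc, ← gm_comm, mul_assoc]⟩

lemma gm_dvd_q {f g : ℝ[X]} (h : f ∣ g) : qPoly f ∣ qPoly g := by
  obtain ⟨k, rfl⟩ := h
  exact ⟨qPoly k, gm_q_mul _ _⟩

lemma gm_cop {f m : ℝ[X]} (h : IsCoprime m f) {A : Hq[X]} (hd : qPoly f ∣ qPoly m * A) :
    qPoly f ∣ A := by
  obtain ⟨u, v, e⟩ := h
  have : A = qPoly u * (qPoly m * A) + qPoly f * (qPoly v * A) := by
    rw [← mul_assoc, ← mul_assoc, ← add_mul, ← gm_q_mul, ← gm_q_mul, ← gm_q_add, mul_comm f v, e,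
      gm_q_one, one_mul]
  rw [this]
  exact dvd_add (gm_dvd_left hd _) (dvd_mul_right _ _)

lemma gm_norm (A : Hq[X]) : ∃ m : ℝ[X], A * cstar A = qPoly m ∧ cstar A * A = qPoly m := by
  by_cases hA : A = 0
  · refine ⟨0, ?_, ?_⟩ <;> simp [hA, gm_q_zero]
  have key : ∃ m : ℝ[X], A * cstar A = qPoly m := by
    have hs : cstar (A * cstar A) = A * cstar A := by rw [gm_star_mul, gm_star_star]
    have : A * cstar A ∈ Polynomial.lifts (algebraMap ℝ Hq) := by
      rw [Polynomial.lifts_iff_coeff_lifts]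
      intro n
      have h2 : star ((A * cstar A).coeff n) = (A * cstar A).coeff n := by
        rw [← gm_coeffQ, hs]
      rw [Quaternion.star_eq_self] at h2
      exact ⟨_, h2.symm⟩
    obtain ⟨m, hm⟩ := (Polynomial.mem_lifts _).mp this
    exact ⟨m, hm.symm⟩
  obtain ⟨m, hm⟩ := key
  refine ⟨m, hm, ?_⟩
  apply mul_left_cancel₀ hA
  rw [← mul_assoc, hm, gm_comm]

/-- the norm of `A` is coprime to `N` -/
def GmGood (N : ℝ[X]) (A : Hq[X]) : Prop :=
  ∃ m : ℝ[X], A * cstar A = qPoly m ∧ cstar A * A = qPoly m ∧ IsCoprime m N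

lemma gm_good_one (N : ℝ[X]) : GmGood N 1 :=
  ⟨1, by simp [gm_star_one, gm_q_one], by simp [gm_star_one, gm_q_one], isCoprime_one_left⟩

lemma gm_good_mul {N : ℝ[X]} {A B : Hq[X]} (hA : GmGood N A) (hB : GmGood N B) :
    GmGood N (A * B) := by
  obtain ⟨m, h1, h2, h3⟩ := hA
  obtain ⟨k, k1, k2, k3⟩ := hB
  refine ⟨m * k, ?_, ?_, h3.mul_left k3⟩
  · rw [gm_star_mul, mul_assoc, ← mul_assoc B, k1, gm_comm k, ← mul_assoc, h1, gm_q_mul]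
  · rw [gm_star_mul, mul_assoc, ← mul_assoc (cstar A), h2, gm_comm m, ← mul_assoc, k2, gm_q_mul,
      gm_comm]

lemma gm_good_list {ι : Type*} (N : ℝ[X]) (f : ι → Hq[X]) (I : List ι)
    (h : ∀ i ∈ I, GmGood N (f i)) : GmGood N (I.map f).prod := by
  induction I with
  | nil => exact gm_good_one N
  | cons a I ih =>
    rw [List.map_cons, List.prod_cons]
    exact gm_good_mul (h a (by simp)) (ih fun i hi => h i (by simp [hi]))

lemma gm_good_star {N : ℝ[X]} {A : Hq[X]} (hA : GmGood N A) : GmGood N (cstar A) := by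
  obtain ⟨m, h1, h2, h3⟩ := hA
  exact ⟨m, by rwa [gm_star_star], by rwa [gm_star_star], h3⟩

lemma gm_good_dvd {N f : ℝ[X]} {A : Hq[X]} (h : f ∣ N) (hA : GmGood N A) : GmGood f A := by
  obtain ⟨m, h1, h2, h3⟩ := hA
  exact ⟨m, h1, h2, h3.of_isCoprime_of_dvd_right h⟩

lemma gm_cancel {f : ℝ[X]} {A B X : Hq[X]} (hA : GmGood f A) (hB : GmGood f B) :
    qPoly f ∣ A * X * B ↔ qPoly f ∣ X := by
  constructor
  · intro h
    obtain ⟨m, h1, h2, h3⟩ := hA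
    obtain ⟨k, k1, k2, k3⟩ := hB
    have h' := dvd_mul_of_dvd_left (gm_dvd_left h (cstar A)) (cstar B)
    have e : cstar A * (A * X * B) * cstar B = qPoly m * (qPoly k * X) := by
      rw [gm_comm k, ← h2, ← k1]; simp only [mul_assoc]
    rw [e] at h'
    exact gm_cop k3 (gm_cop h3 h')
  · intro h
    exact dvd_mul_of_dvd_left (gm_dvd_left h _) _

/- dual part -/
lemma gm_mp_coeff (P D : Hq[X]) (n : ℕ) :
    (mp P D).coeff n = inl (P.coeff n) + inr (D.coeff n) := by
  unfold mp dhQ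
  rw [Polynomial.coeff_add, Polynomial.coeff_C_mul, Polynomial.coeff_map, Polynomial.coeff_map]
  congr 1
  change (inr 1 : DHq) * inl (D.coeff n) = inr (D.coeff n)
  rw [TrivSqZeroExt.inr_mul_inl]
  congr 1
  exact one_mul (D.coeff n)

lemma gm_mp_inj {P D P' D' : Hq[X]} (h : mp P D = mp P' D') : P = P' ∧ D = D' := by
  constructor <;> ext1 n
  · have := congrArg (fun A : DHq[X] => (A.coeff n).fst) h
    simpa [gm_mp_coeff] using this
  · have := congrArg (fun A : DHq[X] => (A.coeff n).snd) h
    simpa [gm_mp_coeff] using this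

lemma gm_mp_mul (P D P' D' : Hq[X]) : mp P D * mp P' D' = mp (P * P') (P * D' + D * P') := by
  ext1 n
  rw [Polynomial.coeff_mul, gm_mp_coeff]
  simp only [gm_mp_coeff]
  ext1
  · rw [TrivSqZeroExt.fst_sum]
    simp [Polynomial.coeff_mul]
  · rw [TrivSqZeroExt.snd_sum]
    simp [Polynomial.coeff_mul, Finset.sum_add_distrib]

lemma gm_mp_one : mp 1 0 = 1 := by
  simp [mp, dhQ]

lemma gm_mp_list {ι : Type*} (cs : ι → ℝ[X]) (Qs Ds : ι → Hq[X]) (I : List ι) :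
    ∃ D', (I.map fun i => mp (qPoly (cs i) * Qs i) (Ds i)).prod =
      mp (qPoly (I.map cs).prod * (I.map Qs).prod) D' := by
  induction I with
  | nil => exact ⟨0, by simp [gm_q_one, gm_mp_one]⟩
  | cons a I ih =>
    obtain ⟨D', h⟩ := ih
    refine ⟨qPoly (cs a) * Qs a * D' + Ds a * (qPoly (I.map cs).prod * (I.map Qs).prod), ?_⟩
    have e : qPoly ((a :: I).map cs).prod * ((a :: I).map Qs).prod =
        qPoly (cs a) * Qs a * (qPoly (I.map cs).prod * (I.map Qs).prod) := by
      simp only [List.map_cons, List.prod_cons, gm_q_mul]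
      rw [mul_assoc, mul_assoc, ← mul_assoc (Qs a), ← gm_comm _ (Qs a)]
      simp only [mul_assoc]
    rw [e, List.map_cons, List.prod_cons, h, gm_mp_mul]

lemma gm_star0 : star (0 : DHq) = 0 := by
  change (inl (star (0 : Hq)) + inr (star (0 : Hq)) : DHq) = 0
  rw [star_zero]; simp

lemma gm_primal_norm {P D : Hq[X]} {f : ℝ[X]} (h : mp P D * cstar (mp P D) = dPoly f) :
    P * cstar P = qPoly f := by
  have hs : cstar (mp P D) = mp (cstar P) (cstar D) := by
    ext1 n
    rw [gm_coeff_cstar gm_star0, gm_mp_coeff, gm_mp_coeff, gm_coeffQ, gm_coeffQ]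
    change inl _ + inr _ = _
    simp
  have hd : dPoly f = mp (qPoly f) 0 := by simp [dPoly, mp, dhQ]
  rw [hs, hd, gm_mp_mul] at h
  exact (gm_mp_inj h).1

lemma gm_reduced_unit {A : Hq[X]} (h : ReducedQ A) {f : ℝ[X]} (hf : f ≠ 0) (hd : qPoly f ∣ A) :
    IsUnit f := by
  have hm : (f * C f.leadingCoeff⁻¹).Monic := Polynomial.monic_mul_leadingCoeff_inv hf
  have hu : IsUnit (C f.leadingCoeff⁻¹ : ℝ[X]) :=
    Polynomial.isUnit_C.mpr (by simpa using hf)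
  have ha : f * C f.leadingCoeff⁻¹ ∣ f := (hu.mul_right_dvd).mpr dvd_rfl
  have := h _ hm ((gm_dvd_q ha).trans hd)
  exact IsUnit.of_mul_eq_one _ this

lemma gm_prim {a b : ℝ[X]} {A B : Hq[X]} (ha : a ≠ 0) (hB : ReducedQ B)
    (e : qPoly a * A = qPoly b * B) : a ∣ b := by
  obtain ⟨a', b', d, hc, rfl, rfl⟩ := UniqueFactorizationMonoid.exists_reduced_factors a ha b
  have hd : d ≠ 0 := left_ne_zero_of_mul ha
  have ha' : a' ≠ 0 := right_ne_zero_of_mul ha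
  rw [gm_q_mul, gm_q_mul, mul_assoc, mul_assoc] at e
  have e' := mul_left_cancel₀ (gm_q_ne hd) e
  have : qPoly a' ∣ B := gm_cop hc.isCoprime.symm (e' ▸ dvd_mul_right _ _)
  have hu := gm_reduced_unit hB ha' this
  exact mul_dvd_mul_left d hu.dvd

/-- abstract multiplicativity -/
lemma gm_abs {r : ℕ} (c : ℝ[X]) (cs : Fin r → ℝ[X]) (hc : c ∣ ∏ i, cs i)
    (hc' : ∀ i, cs i ∣ c)
    (hcop : ∀ i j, i ≠ j → IsCoprime (cs i) (cs j))
    (S : ℝ[X] → Prop) (Ss : Fin r → ℝ[X] → Prop)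
    (hS : ∀ f g, f ∣ g → S g → S f)
    (hSS : ∀ i f, f ∣ cs i → (S f ↔ Ss i f))
    (G : ℝ[X]) (Gs : Fin r → ℝ[X])
    (hG : G.Monic ∧ G ∣ c ∧ S G ∧ ∀ f : ℝ[X], f.Monic → f ∣ c → S f → f ∣ G)
    (hGs : ∀ i, (Gs i).Monic ∧ Gs i ∣ cs i ∧ Ss i (Gs i) ∧
      ∀ f : ℝ[X], f.Monic → f ∣ cs i → Ss i f → f ∣ Gs i) :
    G = ∏ i, Gs i := by
  obtain ⟨h1, h2, h3, h4⟩ := hG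
  apply Polynomial.eq_of_monic_of_associated h1
    (Polynomial.monic_prod_of_monic _ _ fun i _ => (hGs i).1)
  apply associated_of_dvd_dvd
  · have aux : ∀ (s : Finset (Fin r)) (x : ℝ[X]), x ≠ 0 → S x → x ∣ ∏ i ∈ s, cs i →
        x ∣ ∏ i ∈ s, Gs i := by
      intro s
      induction s using Finset.induction_on with
      | empty => intro x _ _ h; simpa using h
      | insert a s ha ih =>
        intro x hx0 hSx hx
        rw [Finset.prod_insert ha] at hx ⊢
        obtain ⟨y, z, hy, hz, rfl⟩ := exists_dvd_and_dvd_of_dvd_mul hx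
        refine mul_dvd_mul ?_ (ih z (right_ne_zero_of_mul hx0) (hS _ _ (dvd_mul_left _ _) hSx) hz)
        have hy0 := left_ne_zero_of_mul hx0
        have hm : (y * C y.leadingCoeff⁻¹).Monic := Polynomial.monic_mul_leadingCoeff_inv hy0
        have hu : IsUnit (C y.leadingCoeff⁻¹ : ℝ[X]) :=
          Polynomial.isUnit_C.mpr (by simpa using hy0)
        have hd : y * C y.leadingCoeff⁻¹ ∣ y := (hu.mul_right_dvd).mpr dvd_rfl
        have h5 := (hGs a).2.2.2 _ hm (hd.trans hy)
          ((hSS a _ (hd.trans hy)).mp (hS _ _ (hd.trans (dvd_mul_right _ _)) hSx))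
        exact (dvd_mul_right _ _).trans h5
    exact aux _ G h1.ne_zero h3 (h2.trans hc)
  · refine Finset.prod_dvd_of_coprime (fun i _ j _ hij => ?_) fun i _ => ?_
    · exact ((hcop i j hij).of_isCoprime_of_dvd_left (hGs i).2.1).of_isCoprime_of_dvd_right
        (hGs j).2.1
    · exact h4 _ (hGs i).1 ((hGs i).2.1.trans (hc' i))
        ((hSS i _ (hGs i).2.1).mpr (hGs i).2.2.1)

lemma gm_aux1 (x : ℝ[X]) {m : ℝ[X]} {A B Qi Di : Hq[X]} (h : cstar A * A = qPoly m) :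
    cstar (A * (Qi * B)) * (qPoly x * (A * Di * B)) =
      qPoly x * (qPoly m * (cstar B * (cstar Qi * Di) * B)) := by
  calc cstar (A * (Qi * B)) * (qPoly x * (A * Di * B))
      = (cstar (A * (Qi * B)) * qPoly x) * (A * Di * B) := (mul_assoc _ _ _).symm
    _ = qPoly x * (cstar (A * (Qi * B)) * (A * Di * B)) := by rw [← gm_comm, mul_assoc]
    _ = qPoly x * ((cstar B * cstar Qi) * (cstar A * A) * (Di * B)) := by
        rw [gm_star_mul, gm_star_mul]; simp only [mul_assoc]
    _ = qPoly x * (qPoly m * (cstar B * cstar Qi) * (Di * B)) := by rw [h, ← gm_comm]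
    _ = _ := by simp only [mul_assoc]

lemma gm_aux2 (x : ℝ[X]) {k : ℝ[X]} {A B Qi Di : Hq[X]} (h : B * cstar B = qPoly k) :
    qPoly x * (A * Di * B) * cstar (A * (Qi * B)) =
      qPoly x * (qPoly k * (A * (Di * cstar Qi) * cstar A)) := by
  calc qPoly x * (A * Di * B) * cstar (A * (Qi * B))
      = qPoly x * ((A * Di) * (B * cstar B) * (cstar Qi * cstar A)) := by
        rw [gm_star_mul, gm_star_mul]; simp only [mul_assoc]
    _ = qPoly x * (qPoly k * (A * Di) * (cstar Qi * cstar A)) := by rw [h, ← gm_comm]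
    _ = _ := by simp only [mul_assoc]

/-- the local comparison of divisibility, in both versions -/
lemma gm_local {f a b ci : ℝ[X]} {A A' B B' Qi Di : Hq[X]} (hf : f ∣ ci)
    (hA : GmGood f A) (hB : GmGood f B) (ha : IsCoprime a f) (hb : IsCoprime b f)
    (D : Hq[X])
    (hD : D = qPoly a * A * (qPoly ci * Qi * B' + Di * (qPoly b * B)) +
      A' * (qPoly ci * Qi * (qPoly b * B))) :
    (qPoly f ∣ cstar (A * (Qi * B)) * D ↔ qPoly f ∣ cstar Qi * Di) ∧
    (qPoly f ∣ D * cstar (A * (Qi * B)) ↔ qPoly f ∣ Di * cstar Qi) := by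
  have hci : ∀ Y : Hq[X], qPoly f ∣ qPoly ci * Y := fun Y =>
    dvd_mul_of_dvd_left (gm_dvd_q hf) Y
  obtain ⟨E, hE, hDE⟩ : ∃ E : Hq[X], qPoly f ∣ E ∧
      D = qPoly (a * b) * (A * Di * B) + E := by
    refine ⟨qPoly a * A * (qPoly ci * Qi * B') + A' * (qPoly ci * Qi * (qPoly b * B)), ?_, ?_⟩
    · refine dvd_add (gm_dvd_left ?_ _) (gm_dvd_left ?_ _) <;> rw [mul_assoc] <;> exact hci _
    · have e : qPoly (a * b) * (A * Di * B) = qPoly a * A * (Di * (qPoly b * B)) := by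
        rw [← mul_assoc Di, ← gm_comm b Di, gm_q_mul]
        simp only [mul_assoc]
        rw [← mul_assoc A (qPoly b), ← gm_comm b A]
        simp only [mul_assoc]
      rw [hD, e, mul_add]; abel
  have hab : IsCoprime (a * b) f := ha.mul_left hb
  have hcan : ∀ (m : ℝ[X]) (Y : Hq[X]), IsCoprime m f →
      (qPoly f ∣ qPoly m * Y ↔ qPoly f ∣ Y) := fun m Y hm =>
    ⟨gm_cop hm, fun h => gm_dvd_left h _⟩
  obtain ⟨m, m1, m2, m3⟩ := id hA
  obtain ⟨k, k1, k2, k3⟩ := id hB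
  constructor
  · have e : cstar (A * (Qi * B)) * D = qPoly (a * b) * (qPoly m * (cstar B * (cstar Qi * Di) * B))
        + cstar (A * (Qi * B)) * E := by
      rw [hDE, mul_add, gm_aux1 (a * b) m2]
    rw [e, dvd_add_left (gm_dvd_left hE _), hcan _ _ hab, hcan _ _ m3,
      gm_cancel (gm_good_star hB) hB]
  · have e : D * cstar (A * (Qi * B)) = qPoly (a * b) * (qPoly k * (A * (Di * cstar Qi) * cstar A))
        + E * cstar (A * (Qi * B)) := by
      rw [hDE, add_mul, gm_aux2 (a * b) k1]
    rw [e, dvd_add_left (dvd_mul_of_dvd_left hE _), hcan _ _ hab, hcan _ _ k3,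
      gm_cancel hA (gm_good_star hA)]

end GM

/-- Multiplicativity of the real gcds `g_L`, `g_R`, `g` along a primary-norm
decomposition. -/
theorem gcd_multiplicativity
    (c : ℝ[X]) (Q D : Hq[X]) (M : DHq[X])
    (hM : M = mp (qPoly c * Q) D)
    (hmonic : M.Monic) (hmotion : IsMotion M)
    (hred : ReducedD M) (hbdd : BoundedD M) (hQred : ReducedQ Q)
    (r : ℕ) (cs : Fin r → ℝ[X]) (Qs Ds : Fin r → Hq[X])
    (Ns : Fin r → ℝ[X]) (ns : Fin r → ℕ)
    (hprod : M = (List.ofFn fun i => mp (qPoly (cs i) * Qs i) (Ds i)).prod)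
    (hMi : ∀ i, (mp (qPoly (cs i) * Qs i) (Ds i)).Monic ∧
      IsMotion (mp (qPoly (cs i) * Qs i) (Ds i)))
    (hQi : ∀ i, ReducedQ (Qs i))
    (hNs : ∀ i, Irreducible (Ns i) ∧ (Ns i).natDegree = 2)
    (hcopN : ∀ i j, i ≠ j → IsCoprime (Ns i) (Ns j))
    (hns : ∀ i, 0 < ns i)
    (hnormi : ∀ i, mp (qPoly (cs i) * Qs i) (Ds i) *
      cstar (mp (qPoly (cs i) * Qs i) (Ds i)) = dPoly (Ns i ^ ns i))
    (gLs gRs gs : Fin r → ℝ[X]) (gL gR g : ℝ[X])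
    (hgLs : ∀ i, IsMrpf2 (gLs i) (cs i) (cstar (Qs i) * Ds i))
    (hgRs : ∀ i, IsMrpf2 (gRs i) (cs i) (Ds i * cstar (Qs i)))
    (hgs : ∀ i, IsMrpf3 (gs i) (cs i) (Ds i * cstar (Qs i)) (cstar (Qs i) * Ds i))
    (hgL : IsMrpf2 gL c (cstar Q * D))
    (hgR : IsMrpf2 gR c (D * cstar Q))
    (hg : IsMrpf3 g c (D * cstar Q) (cstar Q * D)) :
    gL = ∏ i, gLs i ∧ gR = ∏ i, gRs i ∧ g = ∏ i, gs i := by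
  have hnn : ∀ i, ∃ m : ℝ[X], Qs i * cstar (Qs i) = qPoly m ∧ cstar (Qs i) * Qs i = qPoly m ∧
      cs i * cs i * m = Ns i ^ ns i := by
    intro i
    obtain ⟨m, h1, h2⟩ := gm_norm (Qs i)
    refine ⟨m, h1, h2, gm_q_inj ?_⟩
    rw [← gm_primal_norm (hnormi i), gm_star_mul, gm_star_q, gm_q_mul, gm_q_mul, ← h1, mul_assoc,
      mul_assoc, gm_comm (cs i) (Qs i * cstar (Qs i)), mul_assoc]
  have hcN : ∀ i, cs i ∣ Ns i ^ ns i := by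
    intro i
    obtain ⟨m, -, -, h⟩ := hnn i
    exact ⟨cs i * m, by rw [← h, mul_assoc]⟩
  have hcs0 : ∀ i, cs i ≠ 0 := by
    intro i h0
    have := hcN i
    rw [h0, zero_dvd_iff] at this
    exact (hNs i).1.ne_zero (pow_eq_zero_iff (hns i).ne' |>.mp this)
  have hgood : ∀ i (F : ℝ[X]), IsCoprime (Ns i) F → GmGood F (Qs i) := by
    intro i F hF
    obtain ⟨m, h1, h2, h⟩ := hnn i
    exact ⟨m, h1, h2, (hF.pow_left (m := ns i)).of_isCoprime_of_dvd_left
      ⟨cs i * cs i, by rw [← h, mul_comm]⟩⟩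
  have hcop : ∀ i j, i ≠ j → IsCoprime (cs i) (cs j) := fun i j hij =>
    (((hcopN i j hij).pow (m := ns i) (n := ns j)).of_isCoprime_of_dvd_left
      (hcN i)).of_isCoprime_of_dvd_right (hcN j)
  -- splitting
  have hsplit : ∀ i : Fin r, ∃ I J : List (Fin r), List.finRange r = I ++ i :: J ∧
      (∀ j ∈ I, j ≠ i) ∧ (∀ j ∈ J, j ≠ i) := by
    intro i
    obtain ⟨I, J, h⟩ := List.append_of_mem (List.mem_finRange i)
    have hnd := List.nodup_finRange r
    rw [h] at hnd
    refine ⟨I, J, h, ?_, ?_⟩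
    · rintro j hj rfl
      exact (List.nodup_append.mp hnd).2.2 j hj j (by simp) rfl
    · rintro j hj rfl
      exact (List.nodup_cons.mp (List.nodup_append.mp hnd).2.1).1 hj
  set R : Hq[X] := ((List.finRange r).map Qs).prod with hR
  set cc : ℝ[X] := ((List.finRange r).map cs).prod with hcc
  have hccp : cc = ∏ i, cs i := by
    rw [hcc, ← List.ofFn_eq_map, List.prod_ofFn]
  have hcc0 : cc ≠ 0 := by
    rw [hccp]; exact Finset.prod_ne_zero_iff.mpr fun i _ => hcs0 i
  have hgl : ∀ (F : ℝ[X]) (I : List (Fin r)), (∀ j ∈ I, IsCoprime (Ns j) F) →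
      GmGood F (I.map Qs).prod := fun F I h => gm_good_list _ _ _ fun j hj => hgood j F (h j hj)
  -- R is reduced
  have hRred : ReducedQ R := by
    intro F hFm hFd
    by_contra hF1
    have hFu : ¬ IsUnit F := fun h => hF1 (hFm.eq_one_of_isUnit h)
    obtain ⟨p, hp, hpF⟩ := WfDvdMonoid.exists_irreducible_factor hFu hFm.ne_zero
    have hpR : qPoly p ∣ R := (gm_dvd_q hpF).trans hFd
    by_cases hall : ∀ j, IsCoprime (Ns j) p
    · have hg1 := hgl p (List.finRange r) fun j _ => hall j
      have h1 : qPoly p ∣ (1 : Hq[X]) := by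
        rw [← gm_cancel hg1 (gm_good_one p)]
        simpa using hpR
      have h2 : qPoly p ∣ qPoly 1 * 1 := by simpa [gm_q_one] using h1
      obtain ⟨B, hB⟩ := h1
      refine hp.not_isUnit (isUnit_of_dvd_one (gm_prim hp.ne_zero ?_ (?_ : qPoly p * B = qPoly 1 * 1)))
      · intro f hf hfd
        obtain ⟨E, hE⟩ := hfd
        have hdeg := congrArg Polynomial.natDegree hE
        have hE0 : E ≠ 0 := by rintro rfl; simp at hE
        rw [Polynomial.natDegree_mul (gm_q_ne hf.ne_zero) hE0] at hdeg
        have hfq : (qPoly f).natDegree = f.natDegree :=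
          Polynomial.natDegree_map _
        rw [hfq, Polynomial.natDegree_one] at hdeg
        exact hf.natDegree_eq_zero.mp (by omega)
      · rw [← hB, gm_q_one, one_mul]
    · push Not at hall
      obtain ⟨i, hi⟩ := hall
      have hpN : p ∣ Ns i := by
        by_contra hnd
        exact hi ((hp.coprime_iff_not_dvd.mpr hnd).symm)
      obtain ⟨I, J, hIJ, hI, hJ⟩ := hsplit i
      have e : R = (I.map Qs).prod * Qs i * (J.map Qs).prod := by
        rw [hR, hIJ]; simp [mul_assoc]
      rw [e, gm_cancel
        (hgl p I fun j hj => (hcopN j i (hI j hj)).of_isCoprime_of_dvd_right hpN)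
        (hgl p J fun j hj => (hcopN j i (hJ j hj)).of_isCoprime_of_dvd_right hpN)] at hpR
      exact hp.not_isUnit (gm_reduced_unit (hQi i) hp.ne_zero hpR)
  -- comparison of primal parts
  obtain ⟨D', hD'⟩ := gm_mp_list cs Qs Ds (List.finRange r)
  rw [List.ofFn_eq_map] at hprod
  have hPQ : qPoly c * Q = qPoly cc * R :=
    (gm_mp_inj ((hM.symm.trans hprod).trans hD')).1
  have hc0 : c ≠ 0 := by
    rintro rfl
    rw [gm_q_zero, zero_mul] at hPQ
    have hR0 : R = 0 := (mul_eq_zero.mp hPQ.symm).resolve_left (gm_q_ne hcc0)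
    have := hRred X monic_X ⟨0, by rw [hR0, mul_zero]⟩
    exact (Polynomial.X_ne_C (1 : ℝ)) (by rw [this, Polynomial.C_1])
  have hd1 : c ∣ cc := gm_prim hc0 hRred hPQ
  have hd2 : cc ∣ c := gm_prim hcc0 hQred hPQ.symm
  obtain ⟨u, hu⟩ := hd1
  have hQu : Q = qPoly u * R := by
    apply mul_left_cancel₀ (gm_q_ne hc0)
    rw [hPQ, hu, gm_q_mul, mul_assoc]
  have huu : IsUnit u := by
    obtain ⟨v, hv⟩ := hd2
    refine IsUnit.of_mul_eq_one v (mul_left_cancel₀ hc0 ?_)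
    rw [← mul_assoc, ← hu, ← hv, mul_one]
  have hucan : ∀ (f : ℝ[X]) (Y : Hq[X]), (qPoly f ∣ qPoly u * Y ↔ qPoly f ∣ Y) := fun f Y =>
    ⟨gm_cop (isCoprime_one_left.of_isCoprime_of_dvd_left huu.dvd), fun h => gm_dvd_left h _⟩
  have hQD : cstar Q * D = qPoly u * (cstar R * D) := by
    rw [hQu, gm_star_mul, gm_star_q, ← gm_comm, mul_assoc]
  have hDQ : D * cstar Q = qPoly u * (D * cstar R) := by
    rw [hQu, gm_star_mul, gm_star_q, ← mul_assoc, ← gm_comm]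
  have hloc : ∀ i f, f ∣ cs i → ((RDvdQ f (cstar Q * D) ↔ RDvdQ f (cstar (Qs i) * Ds i)) ∧
      (RDvdQ f (D * cstar Q) ↔ RDvdQ f (Ds i * cstar (Qs i)))) := by
    intro i f hf
    change (qPoly f ∣ _ ↔ qPoly f ∣ _) ∧ (qPoly f ∣ _ ↔ qPoly f ∣ _)
    rw [hQD, hDQ, hucan, hucan]
    obtain ⟨I, J, hIJ, hI, hJ⟩ := hsplit i
    obtain ⟨A', hA'⟩ := gm_mp_list cs Qs Ds I
    obtain ⟨B', hB'⟩ := gm_mp_list cs Qs Ds J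
    have e : R = (I.map Qs).prod * (Qs i * (J.map Qs).prod) := by
      rw [hR, hIJ]; simp
    have hNf : ∀ j, j ≠ i → IsCoprime (Ns j) f := fun j hj =>
      ((hcopN j i hj).pow_right (n := ns i)).of_isCoprime_of_dvd_right (hf.trans (hcN i))
    have hcl : ∀ K : List (Fin r), (∀ j ∈ K, j ≠ i) → IsCoprime (K.map cs).prod f := by
      intro K
      induction K with
      | nil => intro _; simpa using isCoprime_one_left
      | cons x K ih =>
        intro hK
        rw [List.map_cons, List.prod_cons]
        exact (((hNf x (hK x (by simp))).pow_left (m := ns x)).of_isCoprime_of_dvd_left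
          (hcN x)).mul_left (ih fun j hj => hK j (by simp [hj]))
    have hDD : D = qPoly (I.map cs).prod * (I.map Qs).prod * (qPoly (cs i) * Qs i * B' +
        Ds i * (qPoly (J.map cs).prod * (J.map Qs).prod)) +
        A' * (qPoly (cs i) * Qs i * (qPoly (J.map cs).prod * (J.map Qs).prod)) := by
      have hz := hM.symm.trans hprod
      rw [hIJ, List.map_append, List.map_cons, List.prod_append, List.prod_cons, hA', hB',
        gm_mp_mul, gm_mp_mul] at hz
      exact (gm_mp_inj hz).2
    rw [e]
    exact gm_local hf (hgl f I fun j hj => hNf j (hI j hj)) (hgl f J fun j hj => hNf j (hJ j hj))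
      (hcl I hI) (hcl J hJ) D hDD
  have hdown : ∀ (Y : Hq[X]) (f g : ℝ[X]), f ∣ g → RDvdQ g Y → RDvdQ f Y := fun Y f g hfg h =>
    (gm_dvd_q hfg).trans (show qPoly g ∣ Y from h)
  have hcdvd : c ∣ ∏ i, cs i := by rw [← hccp]; exact ⟨u, hu⟩
  have hcdvd' : ∀ i, cs i ∣ c := fun i =>
    (Finset.dvd_prod_of_mem cs (Finset.mem_univ i)).trans (hccp ▸ hd2)
  refine ⟨?_, ?_, ?_⟩
  · exact gm_abs c cs hcdvd hcdvd' hcop (fun f => RDvdQ f (cstar Q * D))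
      (fun i f => RDvdQ f (cstar (Qs i) * Ds i)) (hdown _) (fun i f hf => (hloc i f hf).1)
      gL gLs hgL hgLs
  · exact gm_abs c cs hcdvd hcdvd' hcop (fun f => RDvdQ f (D * cstar Q))
      (fun i f => RDvdQ f (Ds i * cstar (Qs i))) (hdown _) (fun i f hf => (hloc i f hf).2)
      gR gRs hgR hgRs
  · refine gm_abs c cs hcdvd hcdvd' hcop
      (fun f => RDvdQ f (D * cstar Q) ∧ RDvdQ f (cstar Q * D))
      (fun i f => RDvdQ f (Ds i * cstar (Qs i)) ∧ RDvdQ f (cstar (Qs i) * Ds i))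
      (fun f g hfg h => ⟨hdown _ f g hfg h.1, hdown _ f g hfg h.2⟩)
      (fun i f hf => and_congr (hloc i f hf).2 (hloc i f hf).1) g gs ?_ ?_
    · obtain ⟨h1, h2, h3, h4, h5⟩ := hg
      exact ⟨h1, h2, ⟨h3, h4⟩, fun f a b d => h5 f a b d.1 d.2⟩
    · intro i
      obtain ⟨h1, h2, h3, h4, h5⟩ := hgs i
      exact ⟨h1, h2, ⟨h3, h4⟩, fun f a b d => h5 f a b d.1 d.2⟩
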